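/- arXiv:2605.29474 — 3 statements merged into one kernel-verified Lean document; each statement's English description precedes it below -/
import Mathlib

section
/- Let d ≥ 1, let f : ℝ → ℝ^d, and let θ₀ ∈ (0, 2π). Suppose f(θ) tends to a limit A as θ → θ₀ from the left and to a limit B as θ → θ₀ from the right, with A ≠ B (a jump discontinuity). Then the Gagliardo H^{1/2} double integral ∫₀^{2π} ∫₀^{2π} ‖f(θ₁) − f(θ₂)‖² / |θ₁ − θ₂|² dθ₁ dθ₂, taken as a Lebesgue integral with values in [0, ∞], is infinite. -/
open Real Set Filter MeasureTheory

/-- The function `x ↦ (b - x)⁻¹` has infinite Lebesgue integral on a left neighbourhood of `b`. -/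
theorem lintegral_Ioo_ofReal_sub_inv_eq_top {a b : ℝ} (hab : a < b) :
    ∫⁻ x in Ioo a b, ENNReal.ofReal ((b - x)⁻¹) = ⊤ := by
  by_contra h
  have hmeas : Measurable fun x : ℝ => (b - x)⁻¹ := by fun_prop
  have hpos : 0 ≤ᵐ[volume.restrict (Ioo a b)] fun x : ℝ => (b - x)⁻¹ := by
    filter_upwards [ae_restrict_mem measurableSet_Ioo] with x hx
    exact inv_nonneg.2 (sub_nonneg.2 hx.2.le)
  have hintegrable : IntegrableOn (fun x : ℝ => (b - x)⁻¹) (Ioo a b) :=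
    (lintegral_ofReal_ne_top_iff_integrable hmeas.aestronglyMeasurable hpos).1 h
  have hinterval : IntervalIntegrable (fun x : ℝ => (x - b)⁻¹) volume a b := by
    rw [intervalIntegrable_iff_integrableOn_Ioo_of_le hab.le]
    refine hintegrable.neg.congr (Eventually.of_forall fun x => ?_)
    simp [← inv_neg]
  rcases intervalIntegrable_sub_inv_iff.1 hinterval with h | h
  · exact hab.ne h
  · exact h right_mem_uIcc

/-- If a kernel dominates `c / |x - y| ^ 2` for `x` in a left and `y` in a right neighbourhood
of a common interior point `t`, then its double integral is infinite. -/
theorem lintegral_lintegral_eq_top_of_le {a b l u t c : ℝ} (hat : a < t) (htb : t < b)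
    (hlt : l < t) (htu : t < u) (hc : 0 < c) {K : ℝ → ℝ → ENNReal}
    (hK : ∀ x ∈ Ioo l t, ∀ y ∈ Ioo t u, ENNReal.ofReal (c / |x - y| ^ 2) ≤ K x y) :
    ∫⁻ x in Ioc a b, ∫⁻ y in Ioc a b, K x y = ⊤ := by
  obtain ⟨m, hm, hmt⟩ : ∃ m, max (max a l) (max (2 * t - b) (2 * t - u)) < m ∧ m < t :=
    exists_between (by simp only [max_lt_iff]; refine ⟨⟨?_, ?_⟩, ?_, ?_⟩ <;> linarith)
  simp only [max_lt_iff] at hm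
  obtain ⟨⟨ham, hlm⟩, hbm, hum⟩ := hm
  have hinner : ∀ x ∈ Ioo m t,
      ENNReal.ofReal (c / 4) * ENNReal.ofReal ((t - x)⁻¹) ≤ ∫⁻ y in Ioc a b, K x y := by
    intro x hx
    have hs : 0 < t - x := sub_pos.2 hx.2
    calc ENNReal.ofReal (c / 4) * ENNReal.ofReal ((t - x)⁻¹)
        = ∫⁻ _ in Ioo t (2 * t - x), ENNReal.ofReal (c / (2 * (t - x)) ^ 2) := by
          rw [setLIntegral_const, Real.volume_Ioo, ← ENNReal.ofReal_mul (by positivity),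
            ← ENNReal.ofReal_mul (by positivity)]
          congr 1
          rw [show 2 * t - x - t = t - x by ring]
          field_simp
          norm_num
      _ ≤ ∫⁻ y in Ioo t (2 * t - x), K x y := by
          refine setLIntegral_mono' measurableSet_Ioo fun y hy => ?_
          refine le_trans (ENNReal.ofReal_le_ofReal ?_)
            (hK x ⟨hlm.trans hx.1, hx.2⟩ y ⟨hy.1, by linarith [hy.2, hx.1]⟩)
          have hxy : 0 < y - x := by linarith [hy.1]
          rw [abs_sub_comm, abs_of_pos hxy]
          gcongr
          linarith [hy.2]
      _ ≤ ∫⁻ y in Ioc a b, K x y :=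
          lintegral_mono_set fun y hy => ⟨hat.trans hy.1, by linarith [hy.2, hx.1]⟩
  rw [eq_top_iff]
  calc (⊤ : ENNReal)
      = ∫⁻ x in Ioo m t, ENNReal.ofReal (c / 4) * ENNReal.ofReal ((t - x)⁻¹) := by
        rw [lintegral_const_mul' _ _ ENNReal.ofReal_ne_top,
          lintegral_Ioo_ofReal_sub_inv_eq_top hmt, ENNReal.mul_top]
        simpa using hc
    _ ≤ ∫⁻ x in Ioo m t, ∫⁻ y in Ioc a b, K x y := setLIntegral_mono' measurableSet_Ioo hinner
    _ ≤ ∫⁻ x in Ioc a b, ∫⁻ y in Ioc a b, K x y :=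
        lintegral_mono_set fun x hx => ⟨ham.trans hx.1, (hx.2.trans htb).le⟩

/-- A function on `[0, 2π]` with a jump discontinuity has infinite Gagliardo `H^{1/2}`
double integral. -/
theorem gagliardo_integral_infinite_of_jump
    (d : ℕ) (hd : 1 ≤ d) (f : ℝ → EuclideanSpace ℝ (Fin d)) (θ₀ : ℝ)
    (hθ₀ : θ₀ ∈ Set.Ioo (0 : ℝ) (2 * π)) (A B : EuclideanSpace ℝ (Fin d))
    (hA : Filter.Tendsto f (nhdsWithin θ₀ (Set.Iio θ₀)) (nhds A))
    (hB : Filter.Tendsto f (nhdsWithin θ₀ (Set.Ioi θ₀)) (nhds B))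
    (hAB : A ≠ B) :
    ∫⁻ θ₁ in Set.Ioc (0 : ℝ) (2 * π), ∫⁻ θ₂ in Set.Ioc (0 : ℝ) (2 * π),
      ENNReal.ofReal (‖f θ₁ - f θ₂‖ ^ 2 / |θ₁ - θ₂| ^ 2) = ⊤ := by
  have hr : 0 < dist A B / 4 := by have := dist_pos.2 hAB; positivity
  obtain ⟨l, hl, hlA⟩ := mem_nhdsLT_iff_exists_Ioo_subset.1 (hA (Metric.ball_mem_nhds A hr))
  obtain ⟨u, hu, huB⟩ := mem_nhdsGT_iff_exists_Ioo_subset.1 (hB (Metric.ball_mem_nhds B hr))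
  refine lintegral_lintegral_eq_top_of_le hθ₀.1 hθ₀.2 hl hu (pow_pos hr 2) fun x hx y hy => ?_
  have hxA : dist (f x) A < dist A B / 4 := hlA hx
  have hyB : dist (f y) B < dist A B / 4 := huB hy
  have htri := dist_triangle4 A (f x) (f y) B
  rw [dist_comm A (f x)] at htri
  rw [← dist_eq_norm]
  gcongr
  linarith
end

section
/- Let n ≥ 1 and let γ : ℝ → ℝⁿ be C¹ and 2π-periodic. Suppose v : ℝ² → ℝⁿ satisfies v(ρ cos α, ρ sin α) = ρ·γ(α) for all ρ ∈ [0,1] and α ∈ ℝ (the cone over γ), and v is differentiable at every point of the open unit ball of ℝ² except possibly the origin. Then the Dirichlet energy of v over the unit ball satisfies (1/2)∫_{B(0,1)} (‖∂ₓv‖² + ‖∂_y v‖²) dA ≤ π·( sup_{t∈[0,2π]} ‖γ(t)‖² + sup_{t∈[0,2π]} ‖γ'(t)‖² ). -/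
open Real Set Metric MeasureTheory

open scoped ENNReal

/-- Every point of the plane has polar coordinates with angle in `[0, 2π]`. -/
lemma exists_polar_angle_mem_Icc (x : EuclideanSpace ℝ (Fin 2)) :
    ∃ α ∈ Icc (0 : ℝ) (2 * π), x = !₂[‖x‖ * cos α, ‖x‖ * sin α] := by
  let z : ℂ := ⟨-x 0, -x 1⟩
  have hz : ‖z‖ = ‖x‖ := by
    rw [Complex.norm_eq_sqrt_sq_add_sq, EuclideanSpace.norm_eq]
    simp [z]
  refine ⟨z.arg + π, ⟨?_, ?_⟩, ?_⟩
  · linarith [Complex.neg_pi_lt_arg z]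
  · linarith [Complex.arg_le_pi z]
  · have h0 := Complex.norm_mul_cos_arg z
    have h1 := Complex.norm_mul_sin_arg z
    rw [hz] at h0 h1
    ext i
    fin_cases i
    · simp [cos_add_pi, h0, z]
    · simp [sin_add_pi, h1, z]

/-- A continuous real function on a compact interval is bounded by its supremum there. -/
lemma le_ciSup_Icc_of_continuous {f : ℝ → ℝ} (hf : Continuous f) {a b t : ℝ}
    (ht : t ∈ Icc a b) : f t ≤ ⨆ s : Icc a b, f s := by
  have hb : BddAbove (range fun s : Icc a b => f s) :=
    isCompact_range (hf.comp continuous_subtype_val) |>.bddAbove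
  exact le_ciSup hb ⟨t, ht⟩

/-- Rotating a pair of vectors by an angle preserves the sum of the squared norms. -/
lemma norm_sq_add_norm_sq_rotation {E : Type*} [NormedAddCommGroup E] [InnerProductSpace ℝ E]
    (a b : E) (α : ℝ) :
    ‖cos α • a - sin α • b‖ ^ 2 + ‖sin α • a + cos α • b‖ ^ 2 = ‖a‖ ^ 2 + ‖b‖ ^ 2 := by
  rw [norm_sub_sq_real, norm_add_sq_real]
  simp only [norm_smul, mul_pow, inner_smul_left, inner_smul_right, norm_eq_abs, sq_abs,
    RCLike.conj_to_real]
  linear_combination (‖a‖ ^ 2 + ‖b‖ ^ 2) * sin_sq_add_cos_sq α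

/-- Energy density of the cone over `γ` at the point with polar coordinates `(ρ, α)`. -/
lemma cone_energy_density_eq {E : Type*} [NormedAddCommGroup E] [InnerProductSpace ℝ E]
    {γ : ℝ → E} {v : EuclideanSpace ℝ (Fin 2) → E}
    (hv : ∀ ρ ∈ Icc (0 : ℝ) 1, ∀ α : ℝ, v !₂[ρ * cos α, ρ * sin α] = ρ • γ α)
    {ρ α : ℝ} (hρ : ρ ∈ Ioo (0 : ℝ) 1) (hγ : DifferentiableAt ℝ γ α)
    (hd : DifferentiableAt ℝ v !₂[ρ * cos α, ρ * sin α]) :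
    ‖fderiv ℝ v !₂[ρ * cos α, ρ * sin α] (EuclideanSpace.single 0 1)‖ ^ 2 +
        ‖fderiv ℝ v !₂[ρ * cos α, ρ * sin α] (EuclideanSpace.single 1 1)‖ ^ 2 =
      ‖γ α‖ ^ 2 + ‖deriv γ α‖ ^ 2 := by
  set e₀ : EuclideanSpace ℝ (Fin 2) := EuclideanSpace.single 0 1 with he₀
  set e₁ : EuclideanSpace ℝ (Fin 2) := EuclideanSpace.single 1 1 with he₁
  have hsum (a b : ℝ) : !₂[a, b] = a • e₀ + b • e₁ := by
    ext i
    fin_cases i <;> simp [he₀, he₁]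
  simp only [hsum] at hv hd ⊢
  set A := fderiv ℝ v ((ρ * cos α) • e₀ + (ρ * sin α) • e₁)
  have hA : HasFDerivAt v A ((ρ * cos α) • e₀ + (ρ * sin α) • e₁) := hd.hasFDerivAt
  have hrad : cos α • A e₀ + sin α • A e₁ = γ α := by
    have hc : HasDerivAt (fun r : ℝ => (r * cos α) • e₀ + (r * sin α) • e₁)
        (cos α • e₀ + sin α • e₁) ρ :=
      ((hasDerivAt_mul_const (cos α)).smul_const e₀).add
        ((hasDerivAt_mul_const (sin α)).smul_const e₁)
    have hr : HasDerivAt (fun r : ℝ => r • γ α) (γ α) ρ := by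
      simpa using (hasDerivAt_id ρ).smul_const (γ α)
    have heq : (fun r : ℝ => r • γ α) =ᶠ[nhds ρ]
        v ∘ fun r : ℝ => (r * cos α) • e₀ + (r * sin α) • e₁ := by
      filter_upwards [Ioo_mem_nhds hρ.1 hρ.2] with r hr
      exact (hv r (Ioo_subset_Icc_self hr) α).symm
    simpa using ((hA.comp_hasDerivAt ρ hc).congr_of_eventuallyEq heq).unique hr
  have htan : -(sin α) • A e₀ + cos α • A e₁ = deriv γ α := by
    have hc : HasDerivAt (fun t : ℝ => (ρ * cos t) • e₀ + (ρ * sin t) • e₁)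
        ((ρ * -sin α) • e₀ + (ρ * cos α) • e₁) α :=
      (((hasDerivAt_cos α).const_mul ρ).smul_const e₀).add
        (((hasDerivAt_sin α).const_mul ρ).smul_const e₁)
    have heq : (fun t : ℝ => ρ • γ t) = v ∘ fun t : ℝ => (ρ * cos t) • e₀ + (ρ * sin t) • e₁ :=
      funext fun t => (hv ρ (Ioo_subset_Icc_self hρ) t).symm
    have h := (heq ▸ hA.comp_hasDerivAt α hc).unique (hγ.hasDerivAt.const_smul ρ)
    refine smul_right_injective E hρ.1.ne' ?_
    simpa [mul_smul, smul_add] using h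
  rw [← hrad, ← htan, ← norm_sq_add_norm_sq_rotation (A e₀) (A e₁) (-α)]
  simp only [cos_neg, sin_neg, neg_smul, sub_neg_eq_add]

/-- Dirichlet energy bound for the cone (radial extension) over a closed `C¹` curve:
`E(v) ≤ π·(sup ‖γ‖² + sup ‖γ'‖²)`. -/
theorem cone_dirichlet_energy_le
    (n : ℕ) (hn : 1 ≤ n) (γ : ℝ → EuclideanSpace ℝ (Fin n)) (hγ : ContDiff ℝ 1 γ)
    (hper : ∀ t : ℝ, γ (t + 2 * π) = γ t)
    (v : EuclideanSpace ℝ (Fin 2) → EuclideanSpace ℝ (Fin n))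
    (hv : ∀ ρ ∈ Set.Icc (0 : ℝ) 1, ∀ α : ℝ,
      v ((WithLp.equiv 2 (Fin 2 → ℝ)).symm ![ρ * Real.cos α, ρ * Real.sin α]) = ρ • γ α)
    (hdiff : ∀ x ∈ Metric.ball (0 : EuclideanSpace ℝ (Fin 2)) 1, x ≠ 0 →
      DifferentiableAt ℝ v x) :
    (1 / 2 : ℝ≥0∞) * ∫⁻ x in Metric.ball (0 : EuclideanSpace ℝ (Fin 2)) 1,
        ENNReal.ofReal (‖fderiv ℝ v x (EuclideanSpace.single 0 1)‖ ^ 2 +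
          ‖fderiv ℝ v x (EuclideanSpace.single 1 1)‖ ^ 2)
      ≤ ENNReal.ofReal (π *
          ((⨆ t : Set.Icc (0 : ℝ) (2 * π), ‖γ t‖ ^ 2) +
            (⨆ t : Set.Icc (0 : ℝ) (2 * π), ‖deriv γ t‖ ^ 2))) := by
  set M := (⨆ t : Set.Icc (0 : ℝ) (2 * π), ‖γ t‖ ^ 2) +
    (⨆ t : Set.Icc (0 : ℝ) (2 * π), ‖deriv γ t‖ ^ 2)
  have hbound : ∀ x ∈ ball (0 : EuclideanSpace ℝ (Fin 2)) 1, x ≠ 0 →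
      ‖fderiv ℝ v x (EuclideanSpace.single 0 1)‖ ^ 2 +
        ‖fderiv ℝ v x (EuclideanSpace.single 1 1)‖ ^ 2 ≤ M := by
    intro x hx hx0
    obtain ⟨α, hα, hxα⟩ := exists_polar_angle_mem_Icc x
    have hd := hdiff x hx hx0
    have hρ : ‖x‖ ∈ Ioo (0 : ℝ) 1 := ⟨norm_pos_iff.2 hx0, mem_ball_zero_iff.1 hx⟩
    generalize ‖x‖ = ρ at hxα hρ
    subst hxα
    rw [cone_energy_density_eq hv hρ (hγ.differentiable one_ne_zero α) hd]
    exact add_le_add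
      (le_ciSup_Icc_of_continuous (f := fun t => ‖γ t‖ ^ 2) (hγ.continuous.norm.pow 2) hα)
      (le_ciSup_Icc_of_continuous (f := fun t => ‖deriv γ t‖ ^ 2)
        (hγ.continuous_deriv_one.norm.pow 2) hα)
  calc
    _ ≤ (1 : ℝ≥0∞) * ∫⁻ _ in ball (0 : EuclideanSpace ℝ (Fin 2)) 1, ENNReal.ofReal M := by
      gcongr ?_ * ?_
      · simp
      · refine lintegral_mono_ae ?_
        filter_upwards [ae_restrict_mem measurableSet_ball,
          ae_restrict_of_ae (Measure.ae_ne volume 0)] with x hx hx0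
        exact ENNReal.ofReal_le_ofReal (hbound x hx hx0)
    _ = ENNReal.ofReal (π * M) := by
      rw [one_mul, setLIntegral_const, EuclideanSpace.volume_ball_fin_two,
        ENNReal.ofReal_mul pi_pos.le, mul_comm]
      simp [ENNReal.ofReal_eq_coe_nnreal pi_pos.le]
end

section
/- Let n ≥ 1, let C > 0 and δ ∈ (0, 1), and let u : ℝ² → ℝⁿ be C¹ on the open unit disk D with Dirichlet energy E(u) = (1/2)∫_D (‖∂ₓu‖² + ‖∂_y u‖²) dA ≤ C. Let z₀ be a point of the unit circle. Then there exists ρ ∈ [δ, √δ] such that for all z, w ∈ D with ‖z − z₀‖ = ρ and ‖w − z₀‖ = ρ, one has ‖u(z) − u(w)‖ ≤ √(8πC / log(1/δ)). -/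
open Real Set Metric MeasureTheory

open scoped ENNReal

/-- Polar coordinates about a point `z₀` of the unit circle, with angles measured from the
direction pointing to the origin. -/
theorem lintegral_polar_about_unit {z₀ : ℂ} (hz₀ : ‖z₀‖ = 1) {F : ℂ → ℝ≥0∞}
    (hF : Measurable F) :
    ∫⁻ r in Ioi (0 : ℝ), ENNReal.ofReal r *
      ∫⁻ θ in Ioo (-π) π, F (z₀ - z₀ * (r * Complex.exp (θ * Complex.I))) = ∫⁻ z, F z := by
  have hrot : ∫⁻ ζ, F (z₀ - z₀ * ζ) = ∫⁻ z, F z := by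
    let a : Circle := ⟨z₀, mem_sphere_zero_iff_norm.2 hz₀⟩
    rw [← lintegral_sub_left_eq_self F z₀]
    exact (rotation a).measurePreserving.lintegral_comp
      (f := fun ζ => F (z₀ - ζ)) (by fun_prop)
  rw [← hrot, ← Complex.lintegral_comp_polarCoord_symm, polarCoord_target,
    Measure.volume_eq_prod, setLIntegral_prod]
  · refine lintegral_congr fun r => ?_
    rw [← lintegral_const_mul _ (by fun_prop)]
    refine lintegral_congr fun θ => ?_
    simp [Complex.exp_mul_I]
  · simp only [Complex.polarCoord_symm_apply, smul_eq_mul]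
    fun_prop

/-- A point at distance `r` from a point of the unit circle lies in the open unit disk iff
`r < 2 cos θ`, with `θ` its angle as seen from that point. -/
theorem sub_mul_exp_mem_ball_iff {z₀ : ℂ} (hz₀ : ‖z₀‖ = 1) {r : ℝ} (hr : 0 < r) (θ : ℝ) :
    z₀ - z₀ * (r * Complex.exp (θ * Complex.I)) ∈ ball (0 : ℂ) 1 ↔ r < 2 * Real.cos θ := by
  have hnorm : ‖z₀ - z₀ * (r * Complex.exp (θ * Complex.I))‖ ^ 2
      = 1 - 2 * r * Real.cos θ + r ^ 2 := by
    rw [← mul_one_sub, norm_mul, hz₀, one_mul, Complex.sq_norm, Complex.normSq_apply,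
      Complex.exp_mul_I]
    simp only [Complex.sub_re, Complex.one_re, Complex.re_ofReal_mul, Complex.sub_im,
      Complex.one_im, Complex.im_ofReal_mul, Complex.add_re, Complex.add_im, Complex.mul_I_re,
      Complex.mul_I_im, Complex.cos_ofReal_re, Complex.cos_ofReal_im, Complex.sin_ofReal_re,
      Complex.sin_ofReal_im]
    linear_combination r ^ 2 * Real.sin_sq_add_cos_sq θ
  rw [mem_ball_zero_iff, ← sq_lt_one_iff₀ (norm_nonneg _), hnorm]
  constructor <;> intro h <;> nlinarith

/-- Cauchy–Schwarz for a real-linear map on the plane. -/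
theorem norm_apply_sq_le_of_complex {E : Type*} [NormedAddCommGroup E] [NormedSpace ℝ E]
    (L : ℂ →L[ℝ] E) (v : ℂ) :
    ‖L v‖ ^ 2 ≤ ‖v‖ ^ 2 * (‖L 1‖ ^ 2 + ‖L Complex.I‖ ^ 2) := by
  have hv : L v = v.re • L 1 + v.im • L Complex.I := by
    rw [← map_smul, ← map_smul, ← map_add]
    congr 1
    apply Complex.ext <;> simp
  have hle : ‖L v‖ ≤ |v.re| * ‖L 1‖ + |v.im| * ‖L Complex.I‖ := by
    rw [hv]
    refine (norm_add_le _ _).trans ?_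
    simp [norm_smul]
  have hsq : ‖v‖ ^ 2 = |v.re| ^ 2 + |v.im| ^ 2 := by
    rw [Complex.sq_norm, Complex.normSq_apply, sq_abs, sq_abs]
    ring
  calc ‖L v‖ ^ 2 ≤ (|v.re| * ‖L 1‖ + |v.im| * ‖L Complex.I‖) ^ 2 := by gcongr
    _ ≤ _ := by
      rw [hsq]
      nlinarith [sq_nonneg (|v.re| * ‖L Complex.I‖ - |v.im| * ‖L 1‖)]

/-- A path whose velocity has square integral at most `K` moves at most `√(ℓ K)` in time `ℓ`. -/
theorem norm_sub_le_sqrt_of_lintegral_sq_le {E : Type*} [NormedAddCommGroup E]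
    [NormedSpace ℝ E] [CompleteSpace E] {γ γ' : ℝ → E} {a b ℓ K : ℝ} (hab : a ≤ b)
    (hℓ : b - a ≤ ℓ) (hℓ0 : 0 < ℓ) (hK : 0 < K)
    (hγ : ∀ t ∈ Icc a b, HasDerivAt γ (γ' t) t) (hcont : ContinuousOn γ' (Icc a b))
    (hint : ∫⁻ t in Icc a b, ENNReal.ofReal (‖γ' t‖ ^ 2) ≤ ENNReal.ofReal K) :
    ‖γ b - γ a‖ ≤ √(ℓ * K) := by
  have hcont' : ContinuousOn γ' (uIcc a b) := by rwa [uIcc_of_le hab]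
  have hsq_int : IntervalIntegrable (fun t => ‖γ' t‖ ^ 2) volume a b :=
    (hcont'.norm.pow 2).intervalIntegrable
  have hsq : ∫ t in a..b, ‖γ' t‖ ^ 2 ≤ K := by
    rw [intervalIntegral.integral_of_le hab, ← integral_Icc_eq_integral_Ioc]
    rw [← ENNReal.ofReal_le_ofReal_iff hK.le, ofReal_integral_eq_lintegral_ofReal]
    · exact hint
    · exact (hcont.norm.pow 2).integrableOn_Icc
    · exact ae_of_all _ fun t => by positivity
  set S := √(ℓ * K) with hS
  have hS0 : 0 < S := Real.sqrt_pos.2 (by positivity)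
  have hS2 : S * S = ℓ * K := Real.mul_self_sqrt (by positivity)
  have hpt : ∀ x : ℝ, x ≤ S / (2 * K) * x ^ 2 + K / (2 * S) := fun x => by
    have : S / (2 * K) * x ^ 2 + K / (2 * S) - x = (S * x - K) ^ 2 / (2 * K * S) := by
      field_simp
      ring
    have : 0 ≤ (S * x - K) ^ 2 / (2 * K * S) := by positivity
    linarith
  rw [← intervalIntegral.integral_eq_sub_of_hasDerivAt (by rwa [uIcc_of_le hab])
    hcont'.intervalIntegrable]
  calc ‖∫ t in a..b, γ' t‖ ≤ ∫ t in a..b, ‖γ' t‖ :=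
        intervalIntegral.norm_integral_le_integral_norm hab
    _ ≤ ∫ t in a..b, (S / (2 * K) * ‖γ' t‖ ^ 2 + K / (2 * S)) :=
        intervalIntegral.integral_mono_on hab hcont'.norm.intervalIntegrable
          ((hsq_int.const_mul _).add intervalIntegrable_const) fun t _ => hpt _
    _ = S / (2 * K) * (∫ t in a..b, ‖γ' t‖ ^ 2) + (b - a) * (K / (2 * S)) := by
        rw [intervalIntegral.integral_add (hsq_int.const_mul _) intervalIntegrable_const]
        simp [mul_div_assoc]
    _ ≤ S / (2 * K) * K + ℓ * (K / (2 * S)) := by gcongr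
    _ = S := by
        field_simp
        linarith

/-- A function with `∫ r G(r) dr` over the positive half-line at most `M` satisfies
`r² G(r) ≤ M / log (b / a)` for some `r ∈ [a, b]`. -/
theorem exists_sq_mul_le_of_lintegral_mul_le {G : ℝ → ℝ≥0∞} (hG : Measurable G) {a b M : ℝ}
    (ha : 0 < a) (hab : a < b)
    (hint : ∫⁻ r in Ioi (0 : ℝ), ENNReal.ofReal r * G r ≤ ENNReal.ofReal M) (hM : 0 ≤ M) :
    ∃ r ∈ Icc a b, ENNReal.ofReal (r ^ 2) * G r ≤ ENNReal.ofReal (M / Real.log (b / a)) := by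
  by_contra! hcon
  set K := M / Real.log (b / a) with hK
  have hlog : 0 < Real.log (b / a) := Real.log_pos ((one_lt_div ha).2 hab)
  have hval : ∫⁻ r in Icc a b, ENNReal.ofReal (K * (1 / r)) = ENNReal.ofReal M := by
    rw [← ofReal_integral_eq_lintegral_ofReal]
    · rw [integral_Icc_eq_integral_Ioc, ← intervalIntegral.integral_of_le hab.le,
        intervalIntegral.integral_const_mul, integral_one_div_of_pos ha (ha.trans hab), hK,
        div_mul_cancel₀ _ hlog.ne']
    · refine ContinuousOn.integrableOn_Icc (continuousOn_const.mul ?_)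
      exact continuousOn_const.div continuousOn_id fun r hr => (ha.trans_le hr.1).ne'
    · filter_upwards [ae_restrict_mem measurableSet_Icc] with r hr
      have := ha.trans_le hr.1
      simp only [Pi.zero_apply]
      positivity
  have hlt : ∫⁻ r in Icc a b, ENNReal.ofReal (K * (1 / r))
      < ∫⁻ r in Icc a b, ENNReal.ofReal r * G r := by
    refine setLIntegral_strict_mono measurableSet_Icc (by simp [hab]) (by fun_prop)
      (hval ▸ ENNReal.ofReal_ne_top) (ae_of_all _ fun r hr => ?_)
    have hr0 : 0 < r := ha.trans_le hr.1
    have h1 := ENNReal.mul_lt_mul_left (a := ENNReal.ofReal (1 / r)) (by simpa using hr0)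
      ENNReal.ofReal_ne_top (hcon r hr)
    rw [mul_right_comm, ← ENNReal.ofReal_mul' (by positivity),
      ← ENNReal.ofReal_mul (by positivity)] at h1
    convert h1 using 3
    field_simp
  have hmono : ∫⁻ r in Icc a b, ENNReal.ofReal r * G r
      ≤ ∫⁻ r in Ioi (0 : ℝ), ENNReal.ofReal r * G r :=
    lintegral_mono_set fun r hr => ha.trans_le hr.1
  exact (hlt.trans_le (hmono.trans hint)).ne hval

/-- Oscillation of a `C¹` map on the unit disk along an arc about a boundary point, in terms of
the square integral of its derivative along that arc. -/
theorem norm_sub_le_sqrt_along_arc {E : Type*} [NormedAddCommGroup E] [NormedSpace ℝ E]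
    [CompleteSpace E] {u : ℂ → E} (hu : ContDiffOn ℝ 1 u (ball (0 : ℂ) 1)) {z₀ : ℂ}
    (hz₀ : ‖z₀‖ = 1) {r K : ℝ} (hr : 0 < r) (hK : 0 < K)
    (hint : ENNReal.ofReal (r ^ 2) * ∫⁻ θ in Ioo (-π) π, (ball (0 : ℂ) 1).indicator
      (fun z => ENNReal.ofReal (‖fderiv ℝ u z 1‖ ^ 2 + ‖fderiv ℝ u z Complex.I‖ ^ 2))
      (z₀ - z₀ * (r * Complex.exp (θ * Complex.I))) ≤ ENNReal.ofReal K)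
    {α β : ℝ} (hα : α ∈ Ioc (-π) π) (hβ : β ∈ Ioc (-π) π) (hαβ : α ≤ β)
    (hαb : z₀ - z₀ * (r * Complex.exp (α * Complex.I)) ∈ ball (0 : ℂ) 1)
    (hβb : z₀ - z₀ * (r * Complex.exp (β * Complex.I)) ∈ ball (0 : ℂ) 1) :
    ‖u (z₀ - z₀ * (r * Complex.exp (β * Complex.I)))
      - u (z₀ - z₀ * (r * Complex.exp (α * Complex.I)))‖ ≤ √(2 * π * K) := by
  set p : ℝ → ℂ := fun θ => z₀ - z₀ * (r * Complex.exp (θ * Complex.I)) with hp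
  set p' : ℝ → ℂ := fun θ => -(z₀ * (r * (Complex.exp (θ * Complex.I) * Complex.I))) with hp'
  have hpderiv : ∀ θ, HasDerivAt p (p' θ) θ := fun θ => by
    have h := ((Complex.ofRealCLM.hasDerivAt (x := θ)).mul_const Complex.I).cexp
    simpa [hp, hp'] using ((h.const_mul (r : ℂ)).const_mul z₀).const_sub z₀
  have hpball : ∀ θ ∈ Icc α β, p θ ∈ ball (0 : ℂ) 1 := fun θ hθ => by
    rw [sub_mul_exp_mem_ball_iff hz₀ hr] at hαb hβb ⊢
    rcases le_total 0 θ with h | h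
    · have := Real.cos_le_cos_of_nonneg_of_le_pi h hβ.2 hθ.2
      linarith
    · have := Real.cos_le_cos_of_nonneg_of_le_pi (neg_nonneg.2 h)
        (by linarith [hα.1] : -α ≤ π) (neg_le_neg hθ.1)
      rw [Real.cos_neg, Real.cos_neg] at this
      linarith
  have hdiff : ∀ θ ∈ Icc α β, HasFDerivAt u (fderiv ℝ u (p θ)) (p θ) := fun θ hθ =>
    ((hu.differentiableOn one_ne_zero).differentiableAt
      (isOpen_ball.mem_nhds (hpball θ hθ))).hasFDerivAt
  have hcont : ContinuousOn (fun θ => fderiv ℝ u (p θ) (p' θ)) (Icc α β) := by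
    refine ContinuousOn.clm_apply ?_ (by fun_prop)
    exact (hu.continuousOn_fderiv_of_isOpen isOpen_ball le_rfl).comp
      (by fun_prop) hpball
  refine norm_sub_le_sqrt_of_lintegral_sq_le (γ := fun θ => u (p θ)) hαβ
    (by linarith [hα.1, hβ.2]) (by positivity) hK
    (fun θ hθ => (hdiff θ hθ).comp_hasDerivAt θ (hpderiv θ)) hcont (le_trans ?_ hint)
  rw [← lintegral_const_mul' _ _ ENNReal.ofReal_ne_top, restrict_Ioo_eq_restrict_Icc]
  calc ∫⁻ θ in Icc α β, ENNReal.ofReal (‖fderiv ℝ u (p θ) (p' θ)‖ ^ 2)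
      ≤ ∫⁻ θ in Icc α β, ENNReal.ofReal (r ^ 2) * (ball (0 : ℂ) 1).indicator
        (fun z => ENNReal.ofReal (‖fderiv ℝ u z 1‖ ^ 2 + ‖fderiv ℝ u z Complex.I‖ ^ 2))
        (p θ) := by
        refine setLIntegral_mono' measurableSet_Icc fun θ hθ => ?_
        rw [indicator_of_mem (hpball θ hθ), ← ENNReal.ofReal_mul (by positivity)]
        refine ENNReal.ofReal_le_ofReal ?_
        have hnorm : ‖p' θ‖ = r := by
          simp [hp', hz₀, Complex.norm_exp_ofReal_mul_I, abs_of_pos hr]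
        simpa [hnorm] using norm_apply_sq_le_of_complex (fderiv ℝ u (p θ)) (p' θ)
    _ ≤ _ := lintegral_mono_set (Icc_subset_Icc hα.1.le hβ.2)

/-- Courant–Lebesgue lemma: for a `C¹` map `u` on the open unit disk with Dirichlet
energy at most `C` and a boundary point `z₀`, there is a good radius `ρ ∈ [δ, √δ]` on
which the oscillation of `u` along the circle of radius `ρ` about `z₀` is at most
`√(8πC / log(1/δ))`. -/
theorem courant_lebesgue
    (n : ℕ) (hn : 1 ≤ n) (C δ : ℝ) (hC : 0 < C) (hδ : δ ∈ Set.Ioo (0 : ℝ) 1)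
    (u : ℂ → EuclideanSpace ℝ (Fin n)) (hu : ContDiffOn ℝ 1 u (Metric.ball (0 : ℂ) 1))
    (henergy : (1 / 2 : ℝ≥0∞) * ∫⁻ z in Metric.ball (0 : ℂ) 1,
        ENNReal.ofReal (‖fderiv ℝ u z 1‖ ^ 2 + ‖fderiv ℝ u z Complex.I‖ ^ 2)
      ≤ ENNReal.ofReal C)
    (z₀ : ℂ) (hz₀ : z₀ ∈ Metric.sphere (0 : ℂ) 1) :
    ∃ ρ ∈ Set.Icc δ (Real.sqrt δ), ∀ z ∈ Metric.ball (0 : ℂ) 1, ∀ w ∈ Metric.ball (0 : ℂ) 1,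
      ‖z - z₀‖ = ρ → ‖w - z₀‖ = ρ →
      ‖u z - u w‖ ≤ Real.sqrt (8 * π * C / Real.log (1 / δ)) := by
  obtain ⟨hδ0, hδ1⟩ := hδ
  have hz₀' : ‖z₀‖ = 1 := by simpa using hz₀
  set F : ℂ → ℝ≥0∞ := (ball (0 : ℂ) 1).indicator
    (fun z => ENNReal.ofReal (‖fderiv ℝ u z 1‖ ^ 2 + ‖fderiv ℝ u z Complex.I‖ ^ 2)) with hFdef
  have hF : Measurable F := by
    refine Measurable.indicator ?_ measurableSet_ball
    have h1 := measurable_fderiv_apply_const ℝ u 1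
    have hI := measurable_fderiv_apply_const ℝ u Complex.I
    fun_prop
  have hFint : ∫⁻ z, F z ≤ ENNReal.ofReal (2 * C) := by
    rw [hFdef, lintegral_indicator measurableSet_ball, ENNReal.ofReal_mul zero_le_two,
      ENNReal.ofReal_ofNat]
    calc _ = 2 * ((1 / 2 : ℝ≥0∞) * ∫⁻ z in ball (0 : ℂ) 1,
          ENNReal.ofReal (‖fderiv ℝ u z 1‖ ^ 2 + ‖fderiv ℝ u z Complex.I‖ ^ 2)) := by
          rw [← mul_assoc, one_div, ENNReal.mul_inv_cancel two_ne_zero ENNReal.ofNat_ne_top,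
            one_mul]
      _ ≤ _ := by gcongr
  have hG : Measurable fun r : ℝ =>
      ∫⁻ θ in Ioo (-π) π, F (z₀ - z₀ * (r * Complex.exp (θ * Complex.I))) :=
    Measurable.lintegral_prod_right'
      (f := fun q : ℝ × ℝ => F (z₀ - z₀ * (q.1 * Complex.exp (q.2 * Complex.I))))
      (by fun_prop)
  have hsqrt : δ < √δ := Real.lt_sqrt_of_sq_lt (by nlinarith)
  obtain ⟨ρ, hρ, hρle⟩ := exists_sq_mul_le_of_lintegral_mul_le hG hδ0 hsqrt
    ((lintegral_polar_about_unit hz₀' hF).trans_le hFint) (by positivity)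
  have hlog : Real.log (√δ / δ) = Real.log (1 / δ) / 2 := by
    rw [Real.log_div (by positivity) hδ0.ne', Real.log_sqrt hδ0.le, one_div, Real.log_inv]
    ring
  have hlog0 : 0 < Real.log (1 / δ) := Real.log_pos ((one_lt_div hδ0).2 hδ1)
  have hbound : 8 * π * C / Real.log (1 / δ) = 2 * π * (2 * C / Real.log (√δ / δ)) := by
    rw [hlog]
    field_simp
    ring
  have hρ0 : 0 < ρ := hδ0.trans_le hρ.1
  have hz₀0 : z₀ ≠ 0 := norm_ne_zero_iff.1 (by simp [hz₀'])
  have hangle : ∀ z : ℂ, ‖z - z₀‖ = ρ → ∃ θ ∈ Ioc (-π) π,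
      z₀ - z₀ * (ρ * Complex.exp (θ * Complex.I)) = z := fun z hz => by
    refine ⟨Complex.arg ((z₀ - z) / z₀), Complex.arg_mem_Ioc _, ?_⟩
    have hnorm : ‖(z₀ - z) / z₀‖ = ρ := by rw [norm_div, hz₀', div_one, norm_sub_rev, hz]
    rw [← hnorm, Complex.norm_mul_exp_arg_mul_I]
    field_simp
    ring
  have hK : 0 < 2 * C / Real.log (√δ / δ) := by
    rw [hlog]
    positivity
  refine ⟨ρ, hρ, fun z hz w hw hzρ hwρ => ?_⟩
  obtain ⟨α, hα, rfl⟩ := hangle z hzρ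
  obtain ⟨β, hβ, rfl⟩ := hangle w hwρ
  rw [hbound]
  rcases le_total α β with h | h
  · rw [norm_sub_rev]
    exact norm_sub_le_sqrt_along_arc hu hz₀' hρ0 hK hρle hα hβ h hz hw
  · exact norm_sub_le_sqrt_along_arc hu hz₀' hρ0 hK hρle hβ hα h hw hz
end
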